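/- (Approximate commutation from a joint measurement.) Let H_A, H_B be finite-dimensional complex Hilbert spaces, ψ ∈ H_A ⊗ H_B a unit vector, and δ ≥ 0. Let P be an orthogonal projection on H_A and M a self-adjoint operator on H_A with M² = 1. Let {Q^{b₁,b₂} : b₁ ∈ {0,1,2}, b₂ ∈ {0,1}} be orthogonal projections on H_B that are mutually orthogonal and sum to the identity. Suppose ‖(P ⊗ 1)ψ − (1 ⊗ (Q^{0,0} + Q^{0,1}))ψ‖ ≤ δ and ‖(M ⊗ 1)ψ − (1 ⊗ Σ_{b₁,b₂} (−1)^{b₂} Q^{b₁,b₂})ψ‖ ≤ δ. Then ‖((PM − MP) ⊗ 1)ψ‖ ≤ 4δ. -/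

import Mathlib

open Matrix Kronecker

/-- The action of a matrix on a vector of the corresponding Euclidean (Hilbert) space. -/
noncomputable def mApply {ι κ : Type*} [Fintype ι] (A : Matrix κ ι ℂ) (v : EuclideanSpace ℂ ι) :
    EuclideanSpace ℂ κ :=
  (WithLp.equiv 2 (κ → ℂ)).symm (A.mulVec (WithLp.equiv 2 (ι → ℂ) v))

theorem mApply_eq {ι : Type*} [Fintype ι] [DecidableEq ι] (A : Matrix ι ι ℂ)
    (v : EuclideanSpace ℂ ι) : mApply A v = Matrix.toEuclideanLin A v := rfl

theorem mApply_mul {ι : Type*} [Fintype ι] (A B : Matrix ι ι ℂ)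
    (v : EuclideanSpace ℂ ι) : mApply (A * B) v = mApply A (mApply B v) := by
  simp [mApply, Matrix.mulVec_mulVec]

theorem mApply_sub_left {ι : Type*} [Fintype ι] (A B : Matrix ι ι ℂ)
    (v : EuclideanSpace ℂ ι) : mApply (A - B) v = mApply A v - mApply B v := by
  simp [mApply, Matrix.sub_mulVec]

theorem mApply_sub {ι : Type*} [Fintype ι] [DecidableEq ι] (A : Matrix ι ι ℂ)
    (v w : EuclideanSpace ℂ ι) : mApply A (v - w) = mApply A v - mApply A w := by
  simp [mApply_eq]

theorem mApply_inner {ι : Type*} [Fintype ι] [DecidableEq ι] (A : Matrix ι ι ℂ)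
    (hA : A.IsHermitian) (v w : EuclideanSpace ℂ ι) :
    inner ℂ (mApply A v) w = inner ℂ v (mApply A w) := by
  simpa [mApply_eq] using (Matrix.isHermitian_iff_isSymmetric.1 hA) v w

theorem mApply_sq {ι : Type*} [Fintype ι] [DecidableEq ι] (A : Matrix ι ι ℂ)
    (hA : A.IsHermitian) (v : EuclideanSpace ℂ ι) :
    ‖mApply A v‖ * ‖mApply A v‖ ≤ ‖v‖ * ‖mApply (A * A) v‖ := by
  have h := norm_inner_le_norm (𝕜 := ℂ) v (mApply (A * A) v)
  rw [mApply_mul, ← mApply_inner A hA, inner_self_eq_norm_sq_to_K] at h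
  rw [mApply_mul]
  simpa [pow_two] using h

theorem mApply_proj {ι : Type*} [Fintype ι] [DecidableEq ι] (A : Matrix ι ι ℂ)
    (hA : A.IsHermitian) (h : A * A = A) (v : EuclideanSpace ℂ ι) : ‖mApply A v‖ ≤ ‖v‖ := by
  have h1 := mApply_sq A hA v
  rw [h] at h1
  by_contra! hc
  nlinarith [norm_nonneg v]

theorem mApply_unit {ι : Type*} [Fintype ι] [DecidableEq ι] (A : Matrix ι ι ℂ)
    (hA : A.IsHermitian) (h : A * A = 1) (v : EuclideanSpace ℂ ι) : ‖mApply A v‖ ≤ ‖v‖ := by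
  have h1 := mApply_sq A hA v
  have h2 : mApply (1 : Matrix ι ι ℂ) v = v := by simp [mApply]
  rw [h, h2] at h1
  exact abs_le_of_sq_le_sq' (by nlinarith) (norm_nonneg v) |>.2

theorem kron_herm {ι κ : Type*} {A : Matrix ι ι ℂ} {B : Matrix κ κ ℂ}
    (hA : A.IsHermitian) (hB : B.IsHermitian) : (A ⊗ₖ B).IsHermitian := by
  rw [Matrix.IsHermitian, Matrix.conjTranspose_kronecker, hA.eq, hB.eq]

/-- Approximate commutation from a joint measurement.
`P` is an orthogonal projection on `H_A = ℂ^{nA}`, `M` a binary observable on `H_A`, and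
`Q b₁ b₂` (for `b₁ ∈ {0,1,2}`, `b₂ ∈ {0,1}`) a projective measurement on `H_B = ℂ^{nB}`. -/
theorem stmt_19 (nA nB : ℕ) (ψ : EuclideanSpace ℂ (Fin nA × Fin nB)) (hψ : ‖ψ‖ = 1)
    (δ : ℝ) (hδ : 0 ≤ δ)
    (P : Matrix (Fin nA) (Fin nA) ℂ) (hPh : P.IsHermitian) (hPsq : P * P = P)
    (M : Matrix (Fin nA) (Fin nA) ℂ) (hMh : M.IsHermitian) (hMsq : M * M = 1)
    (Q : Fin 3 → Fin 2 → Matrix (Fin nB) (Fin nB) ℂ)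
    (hQh : ∀ b₁ b₂, (Q b₁ b₂).IsHermitian)
    (hQsq : ∀ b₁ b₂, Q b₁ b₂ * Q b₁ b₂ = Q b₁ b₂)
    (hQorth : ∀ b₁ b₂ b₁' b₂', (b₁, b₂) ≠ (b₁', b₂') → Q b₁ b₂ * Q b₁' b₂' = 0)
    (hQsum : ∑ b₁ : Fin 3, ∑ b₂ : Fin 2, Q b₁ b₂ = 1)
    (h1 : ‖mApply (P ⊗ₖ (1 : Matrix (Fin nB) (Fin nB) ℂ)) ψ -
        mApply ((1 : Matrix (Fin nA) (Fin nA) ℂ) ⊗ₖ (Q 0 0 + Q 0 1)) ψ‖ ≤ δ)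
    (h2 : ‖mApply (M ⊗ₖ (1 : Matrix (Fin nB) (Fin nB) ℂ)) ψ -
        mApply ((1 : Matrix (Fin nA) (Fin nA) ℂ) ⊗ₖ
          (∑ b₁ : Fin 3, ∑ b₂ : Fin 2, ((-1 : ℂ) ^ (b₂ : ℕ)) • Q b₁ b₂)) ψ‖ ≤ δ) :
    ‖mApply ((P * M - M * P) ⊗ₖ (1 : Matrix (Fin nB) (Fin nB) ℂ)) ψ‖ ≤ 4 * δ := by
  have hS : ∑ b₁ : Fin 3, ∑ b₂ : Fin 2, ((-1 : ℂ) ^ (b₂ : ℕ)) • Q b₁ b₂ =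
      (Q 0 0 - Q 0 1) + (Q 1 0 - Q 1 1) + (Q 2 0 - Q 2 1) := by
    simp [Fin.sum_univ_succ]; abel
  have hO : ∀ b₁ b₂ b₁' b₂', Q b₁ b₂ * Q b₁' b₂' =
      if (b₁, b₂) = (b₁', b₂') then Q b₁ b₂ else 0 := by
    intro a b c d
    split_ifs with h
    · obtain ⟨rfl, rfl⟩ := Prod.mk.inj h
      exact hQsq a b
    · exact hQorth a b c d h
  rw [hS] at h2
  set S := (Q 0 0 - Q 0 1) + (Q 1 0 - Q 1 1) + (Q 2 0 - Q 2 1) with hSd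
  set R := Q 0 0 + Q 0 1 with hRd
  have hSh : S.IsHermitian :=
    (((hQh _ _).sub (hQh _ _)).add ((hQh _ _).sub (hQh _ _))).add ((hQh _ _).sub (hQh _ _))
  have hRh : R.IsHermitian := (hQh _ _).add (hQh _ _)
  have hSS : S * S = 1 := by
    rw [← hQsum, hSd]
    simp [Fin.sum_univ_succ, mul_add, add_mul, mul_sub, sub_mul, hO]; abel
  have hRR : R * R = R := by
    rw [hRd]; simp [mul_add, add_mul, hO]
  have hRS : R * S = S * R := by
    rw [hRd, hSd]; simp [mul_add, add_mul, mul_sub, sub_mul, hO]; abel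
  have h1h {n : ℕ} : (1 : Matrix (Fin n) (Fin n) ℂ).IsHermitian := Matrix.isHermitian_one
  set p := P ⊗ₖ (1 : Matrix (Fin nB) (Fin nB) ℂ) with hp
  set m := M ⊗ₖ (1 : Matrix (Fin nB) (Fin nB) ℂ) with hm
  set r := (1 : Matrix (Fin nA) (Fin nA) ℂ) ⊗ₖ R with hr
  set s := (1 : Matrix (Fin nA) (Fin nA) ℂ) ⊗ₖ S with hs
  have cp := mApply_proj p (kron_herm hPh h1h)
    (by rw [hp, ← Matrix.mul_kronecker_mul, hPsq, one_mul])
  have cr := mApply_proj r (kron_herm h1h hRh)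
    (by rw [hr, ← Matrix.mul_kronecker_mul, hRR, one_mul])
  have cm := mApply_unit m (kron_herm hMh h1h)
    (by rw [hm, ← Matrix.mul_kronecker_mul, hMsq, one_mul, Matrix.one_kronecker_one])
  have cs := mApply_unit s (kron_herm h1h hSh)
    (by rw [hs, ← Matrix.mul_kronecker_mul, hSS, one_mul, Matrix.one_kronecker_one])
  have eps : p * s = s * p := by
    rw [hp, hs, ← Matrix.mul_kronecker_mul, ← Matrix.mul_kronecker_mul]; simp
  have emr : m * r = r * m := by
    rw [hm, hr, ← Matrix.mul_kronecker_mul, ← Matrix.mul_kronecker_mul]; simp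
  have ers : r * s = s * r := by
    rw [hr, hs, ← Matrix.mul_kronecker_mul, ← Matrix.mul_kronecker_mul, hRS]
  have ecomm : (P * M - M * P) ⊗ₖ (1 : Matrix (Fin nB) (Fin nB) ℂ) = p * m - m * p := by
    rw [hp, hm, ← Matrix.mul_kronecker_mul, ← Matrix.mul_kronecker_mul, one_mul]
    ext ⟨i, j⟩ ⟨k, l⟩
    simp [Matrix.kroneckerMap_apply, sub_mul]
  have key : mApply (p * m - m * p) ψ =
      mApply p (mApply m ψ - mApply s ψ) + mApply s (mApply p ψ - mApply r ψ)
      - mApply m (mApply p ψ - mApply r ψ) - mApply r (mApply m ψ - mApply s ψ) := by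
    simp only [mApply_sub, mApply_sub_left, ← mApply_mul, eps, emr, ers]
    abel
  rw [ecomm, key]
  refine (norm_sub_le _ _).trans ?_
  have t1 := norm_sub_le (mApply p (mApply m ψ - mApply s ψ) + mApply s (mApply p ψ - mApply r ψ))
    (mApply m (mApply p ψ - mApply r ψ))
  have t2 := norm_add_le (mApply p (mApply m ψ - mApply s ψ)) (mApply s (mApply p ψ - mApply r ψ))
  linarith [cp (mApply m ψ - mApply s ψ), cs (mApply p ψ - mApply r ψ),
    cm (mApply p ψ - mApply r ψ), cr (mApply m ψ - mApply s ψ)]
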